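/- arXiv:1305.3570 — 2 statements merged into one kernel-verified Lean document; each statement's English description precedes it below -/
import Mathlib

section
/- For any simple graph G with n vertices, m edges, clique number ω ≥ 2 and Σ_i d_i² the sum of squared degrees, one has 2m·ν·ω ≤ (ω-1)n², where ν = n·(Σ_i d_i²)/(4m²); equivalently, ω·Σ_i d_i² ≤ 2(ω-1)·n·m. -/
open Finset

/-! Following Moon and Moser, count the common neighbors of cliques. If a vertex is not adjacent
to the whole of a finite set `R`, it is adjacent to `R.erase i` for at most one `i ∈ R`, since such
an `i` is its only non-neighbor in `R`. Summing this over all `(s + 1)`-cliques `R`, and applying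
the Cauchy-Schwarz inequality to their common-neighbor counts, bounds the squared counts of
`s`-cliques by those of `(s + 1)`-cliques. The recursion starts at `s = ω`, where a clique has no
common neighbor, and at `s = 1` the counts are the degrees. -/

section Mean

variable {ι R : Type*} [Semiring R] [LinearOrder R] [IsStrictOrderedRing R] [ExistsAddOfLE R]

lemma mul_sum_le_mul_card_of_mul_sum_sq_le {s : Finset ι} {f : ι → R} {a b : R}
    (ha : 0 ≤ a) (hb : 0 ≤ b) (h : a * ∑ i ∈ s, f i ^ 2 ≤ b * ∑ i ∈ s, f i) :
    a * ∑ i ∈ s, f i ≤ b * #s := by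
  obtain hsum | hsum := le_or_gt (∑ i ∈ s, f i) 0
  · exact (mul_nonpos_of_nonneg_of_nonpos ha hsum).trans (mul_nonneg hb (Nat.cast_nonneg _))
  refine le_of_mul_le_mul_right ?_ hsum
  calc a * (∑ i ∈ s, f i) * ∑ i ∈ s, f i
    _ = a * (∑ i ∈ s, f i) ^ 2 := by rw [mul_assoc, sq]
    _ ≤ a * (#s * ∑ i ∈ s, f i ^ 2) := by gcongr; exact sq_sum_le_card_mul_sum_sq
    _ = #s * (a * ∑ i ∈ s, f i ^ 2) := by rw [← mul_assoc, ← Nat.cast_comm, mul_assoc]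
    _ ≤ #s * (b * ∑ i ∈ s, f i) := by gcongr
    _ = b * #s * ∑ i ∈ s, f i := by rw [← mul_assoc, Nat.cast_comm]

end Mean

section CommonNeighbors

variable {V : Type*} [Fintype V] (G : SimpleGraph V) [DecidableRel G.Adj]

/-- The set of vertices adjacent to every vertex of `s`, extending `SimpleGraph.commonNeighbors`
from pairs to finite sets. For a clique `s` these are the vertices extending it to a larger clique;
for `s = ∅` they are all the vertices. -/
def commonNeighborFinset (s : Finset V) : Finset V := {v | ∀ u ∈ s, G.Adj u v}

variable {G}

@[simp]
lemma mem_commonNeighborFinset {s : Finset V} {v : V} :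
    v ∈ commonNeighborFinset G s ↔ ∀ u ∈ s, G.Adj u v := by
  simp [commonNeighborFinset]

lemma notMem_of_mem_commonNeighborFinset {s : Finset V} {v : V}
    (hv : v ∈ commonNeighborFinset G s) : v ∉ s := fun hvs =>
  G.irrefl (mem_commonNeighborFinset.1 hv v hvs)

lemma commonNeighborFinset_eq_empty_of_cliqueFree {k : ℕ} (hfree : G.CliqueFree (k + 1))
    {s : Finset V} (hs : G.IsNClique k s) : commonNeighborFinset G s = ∅ := by
  classical
  exact eq_empty_of_forall_notMem fun v hv => hfree (insert v s) <|
    hs.insert fun u hu => (mem_commonNeighborFinset.1 hv u hu).symm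

variable (G)

lemma commonNeighborFinset_anti : Antitone (commonNeighborFinset G) := fun s t hst v hv => by
  simp only [mem_commonNeighborFinset] at hv ⊢
  exact fun u hu => hv u (hst hu)

@[simp]
lemma commonNeighborFinset_singleton (v : V) :
    commonNeighborFinset G {v} = G.neighborFinset v := by
  ext u
  simp

variable [DecidableEq V]

lemma pairwiseDisjoint_commonNeighborFinset_erase_sdiff (s : Finset V) :
    (s : Set V).PairwiseDisjoint fun i =>
      commonNeighborFinset G (s.erase i) \ commonNeighborFinset G s := by
  intro i _ j _ hij
  refine disjoint_left.2 fun v hvi hvj => ?_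
  simp only [mem_sdiff, mem_commonNeighborFinset, mem_erase] at hvi hvj
  refine hvi.2 fun u hu => ?_
  by_cases hui : u = i
  · exact hvj.1 u ⟨hui ▸ hij, hu⟩
  · exact hvi.1 u ⟨hui, hu⟩

lemma sum_card_commonNeighborFinset_erase_add_card_le (s : Finset V) :
    ∑ i ∈ s, #(commonNeighborFinset G (s.erase i)) + #(commonNeighborFinset G s) ≤
      #s * #(commonNeighborFinset G s) + Fintype.card V := by
  set N := commonNeighborFinset G s
  have hsdiff : ∑ i ∈ s, #(commonNeighborFinset G (s.erase i) \ N) + #N ≤ Fintype.card V := by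
    rw [← card_biUnion (pairwiseDisjoint_commonNeighborFinset_erase_sdiff G s),
      ← card_union_of_disjoint]
    · exact card_le_univ _
    · exact (disjoint_biUnion_left _ _ _).2 fun i _ => sdiff_disjoint
  have hsplit : ∀ i ∈ s, #(commonNeighborFinset G (s.erase i)) =
      #(commonNeighborFinset G (s.erase i) \ N) + #N := fun i _ =>
    (card_sdiff_add_card_eq_card (commonNeighborFinset_anti G (erase_subset i s))).symm
  rw [sum_congr rfl hsplit, sum_add_distrib, sum_const, smul_eq_mul]
  lia

lemma sum_cliqueFinset_succ_sum_erase {M : Type*} [AddCommMonoid M] (k : ℕ)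
    (f : Finset V → V → M) :
    ∑ s ∈ G.cliqueFinset (k + 1), ∑ v ∈ s, f (s.erase v) v =
      ∑ t ∈ G.cliqueFinset k, ∑ v ∈ commonNeighborFinset G t, f t v := by
  rw [sum_sigma', sum_sigma']
  refine sum_bij' (fun p _ => ⟨p.1.erase p.2, p.2⟩) (fun p _ => ⟨insert p.2 p.1, p.2⟩)
    ?_ ?_ ?_ ?_ fun _ _ => rfl
  · rintro ⟨s, v⟩ hs
    simp only [mem_sigma, SimpleGraph.mem_cliqueFinset_iff, mem_commonNeighborFinset] at hs ⊢
    exact ⟨hs.1.erase_of_mem hs.2, fun u hu =>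
      hs.1.isClique (mem_of_mem_erase hu) hs.2 (ne_of_mem_erase hu)⟩
  · rintro ⟨t, v⟩ ht
    simp only [mem_sigma, SimpleGraph.mem_cliqueFinset_iff, mem_commonNeighborFinset] at ht ⊢
    exact ⟨ht.1.insert fun u hu => (ht.2 u hu).symm, mem_insert_self v t⟩
  · rintro ⟨s, v⟩ hs
    rw [insert_erase (mem_sigma.1 hs).2]
  · rintro ⟨t, v⟩ ht
    rw [erase_insert (notMem_of_mem_commonNeighborFinset (mem_sigma.1 ht).2)]

lemma sum_cliqueFinset_card_commonNeighborFinset (k : ℕ) :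
    ∑ s ∈ G.cliqueFinset k, #(commonNeighborFinset G s) =
      (k + 1) * #(G.cliqueFinset (k + 1)) := by
  have h := sum_cliqueFinset_succ_sum_erase G k fun _ _ => 1
  simp only [← card_eq_sum_ones] at h
  rw [← h, sum_const_nat fun s hs => (SimpleGraph.mem_cliqueFinset_iff.1 hs).card_eq, mul_comm]

lemma sum_cliqueFinset_card_commonNeighborFinset_sq_le (k : ℕ) :
    ∑ s ∈ G.cliqueFinset k, #(commonNeighborFinset G s) ^ 2 ≤
      k * ∑ s ∈ G.cliqueFinset (k + 1), #(commonNeighborFinset G s) +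
        Fintype.card V * #(G.cliqueFinset (k + 1)) := by
  have hclique : ∀ s ∈ G.cliqueFinset (k + 1),
      ∑ v ∈ s, #(commonNeighborFinset G (s.erase v)) ≤
        k * #(commonNeighborFinset G s) + Fintype.card V := fun s hs => by
    have h := sum_card_commonNeighborFinset_erase_add_card_le G s
    rw [(SimpleGraph.mem_cliqueFinset_iff.1 hs).card_eq] at h
    lia
  calc ∑ s ∈ G.cliqueFinset k, #(commonNeighborFinset G s) ^ 2
    _ = ∑ s ∈ G.cliqueFinset (k + 1), ∑ v ∈ s, #(commonNeighborFinset G (s.erase v)) := by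
      simp only [sum_cliqueFinset_succ_sum_erase G k fun s _ => #(commonNeighborFinset G s),
        sum_const, smul_eq_mul, sq]
    _ ≤ ∑ s ∈ G.cliqueFinset (k + 1), (k * #(commonNeighborFinset G s) + Fintype.card V) :=
      sum_le_sum hclique
    _ = _ := by rw [sum_add_distrib, ← mul_sum, sum_const, smul_eq_mul, mul_comm #_]

lemma cliqueFinset_one :
    G.cliqueFinset 1 = univ.map ⟨singleton, singleton_injective⟩ := by
  ext s
  simp [SimpleGraph.isNClique_one, eq_comm]

variable {G}

-- Here `k + t` plays the role of `ω`; parametrizing by `t = ω - k` avoids truncated subtraction.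
theorem add_mul_sum_cliqueFinset_card_commonNeighborFinset_sq_le {k t : ℕ}
    (hfree : G.CliqueFree (k + t + 1)) :
    (k + t) * ∑ s ∈ G.cliqueFinset k, #(commonNeighborFinset G s) ^ 2 ≤
      t * Fintype.card V * ∑ s ∈ G.cliqueFinset k, #(commonNeighborFinset G s) := by
  induction t generalizing k with
  | zero =>
    have hempty : ∀ s ∈ G.cliqueFinset k, commonNeighborFinset G s = ∅ := fun s hs =>
      commonNeighborFinset_eq_empty_of_cliqueFree hfree (SimpleGraph.mem_cliqueFinset_iff.1 hs)
    rw [sum_eq_zero fun s hs => by rw [hempty s hs, card_empty, sq, zero_mul], mul_zero]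
    exact Nat.zero_le _
  | succ t ih =>
    set n := Fintype.card V
    set K := #(G.cliqueFinset (k + 1))
    set C := ∑ s ∈ G.cliqueFinset (k + 1), #(commonNeighborFinset G s)
    have hmean : (k + 1 + t) * C ≤ t * n * K :=
      mul_sum_le_mul_card_of_mul_sum_sq_le (Nat.zero_le _) (Nat.zero_le _)
        (ih (hfree.mono (by lia)))
    calc (k + (t + 1)) * ∑ s ∈ G.cliqueFinset k, #(commonNeighborFinset G s) ^ 2
      _ ≤ (k + (t + 1)) * (k * C + n * K) := by
        gcongr
        exact sum_cliqueFinset_card_commonNeighborFinset_sq_le G k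
      _ = k * ((k + 1 + t) * C) + (k + t + 1) * n * K := by ring
      _ ≤ k * (t * n * K) + (k + t + 1) * n * K := by gcongr
      _ = (t + 1) * n * ((k + 1) * K) := by ring
      _ = _ := by rw [sum_cliqueFinset_card_commonNeighborFinset]

end CommonNeighbors

theorem degree_turan {V : Type*} [Fintype V] [DecidableEq V]
    (G : SimpleGraph V) [DecidableRel G.Adj]
    (n m ω : ℕ) (hn : n = Fintype.card V) (hm : m = G.edgeFinset.card) (hm0 : 0 < m)
    (hω2 : 2 ≤ ω) (hfree : G.CliqueFree (ω + 1)) :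
    ω * ∑ i, (G.degree i) ^ 2 ≤ 2 * (ω - 1) * n * m := by
  obtain ⟨t, rfl⟩ : ∃ t, ω = 1 + t := Nat.exists_eq_add_of_le (by lia)
  calc (1 + t) * ∑ i, G.degree i ^ 2
    _ ≤ t * Fintype.card V * ∑ i, G.degree i := by
      simpa [cliqueFinset_one] using
        add_mul_sum_cliqueFinset_card_commonNeighborFinset_sq_le hfree
    _ = 2 * (1 + t - 1) * n * m := by
      rw [G.sum_degrees_eq_twice_card_edges, ← hn, ← hm, Nat.add_sub_cancel_left]
      ring
end

section
/- For any simple graph G with n vertices, m edges and t triangles, t ≥ (Σ_i d_i² - n·m)/3; equivalently, with ν = n·(Σ_i d_i²)/(4m²), t ≥ m(4mν - n²)/(3n). -/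
open Finset

/-!
Two adjacent vertices `v`, `w` have at least `d_v + d_w - n` common neighbours, and each of these
completes the edge `vw` to a triangle. Summing over all ordered pairs of adjacent vertices, every
degree `d_v` occurs `2 * d_v` times and every triangle `6` times.
-/

theorem neighborFinset_inter_eq_erase_of_isClique {V : Type*} [DecidableEq V] {G : SimpleGraph V}
    {s : Finset V} {v : V} [Fintype (G.neighborSet v)] (hs : G.IsClique s) (hv : v ∈ s) :
    G.neighborFinset v ∩ s = s.erase v := by
  ext w
  simp only [mem_inter, G.mem_neighborFinset, mem_erase]
  exact ⟨fun h ↦ ⟨h.1.ne', h.2⟩, fun h ↦ ⟨hs hv h.2 h.1.symm, h.2⟩⟩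

section Counting

variable {V : Type*} [Fintype V] (G : SimpleGraph V) [DecidableRel G.Adj]

theorem sum_sum_neighborFinset_comm {M : Type*} [AddCommMonoid M] (f : V → V → M) :
    ∑ v, ∑ w ∈ G.neighborFinset v, f v w = ∑ w, ∑ v ∈ G.neighborFinset w, f v w :=
  sum_comm' (by simp [G.adj_comm])

theorem sum_sum_neighborFinset_left {M : Type*} [AddCommMonoid M] (f : V → M) :
    ∑ v, ∑ _w ∈ G.neighborFinset v, f v = ∑ v, G.degree v • f v := by
  simp only [sum_const, G.card_neighborFinset_eq_degree]

theorem sum_sum_neighborFinset_right {M : Type*} [AddCommMonoid M] (f : V → M) :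
    ∑ v, ∑ w ∈ G.neighborFinset v, f w = ∑ v, G.degree v • f v := by
  rw [sum_sum_neighborFinset_comm, sum_sum_neighborFinset_left]

theorem sum_sum_neighborFinset_const {M : Type*} [AddCommMonoid M] (c : M) :
    ∑ v, ∑ _w ∈ G.neighborFinset v, c = (2 * #G.edgeFinset) • c := by
  rw [sum_sum_neighborFinset_left, ← sum_smul, G.sum_degrees_eq_twice_card_edges]

variable [DecidableEq V]

theorem degree_add_degree_le_card_add_card_inter (v w : V) :
    G.degree v + G.degree w ≤ Fintype.card V + #(G.neighborFinset v ∩ G.neighborFinset w) := by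
  rw [← G.card_neighborFinset_eq_degree, ← G.card_neighborFinset_eq_degree,
    ← card_union_add_card_inter]
  gcongr
  exact card_le_univ _

variable {G}

theorem filter_mem_cliqueFinset_three_eq_image {v w : V} (hvw : G.Adj v w) :
    {s ∈ G.cliqueFinset 3 | v ∈ s ∧ w ∈ s} =
      (G.neighborFinset v ∩ G.neighborFinset w).image fun u ↦ {v, w, u} := by
  ext s
  simp only [mem_filter, G.mem_cliqueFinset_iff, mem_image, mem_inter, G.mem_neighborFinset]
  constructor
  · rintro ⟨hs, hv, hw⟩
    have hw' : w ∈ s.erase v := mem_erase.2 ⟨hvw.ne', hw⟩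
    obtain ⟨u, hu⟩ : ∃ u, (s.erase v).erase w = {u} := by
      rw [← card_eq_one, card_erase_of_mem hw', card_erase_of_mem hv, hs.card_eq]
    obtain rfl : {v, w, u} = s := by rw [← hu, insert_erase hw', insert_erase hv]
    exact ⟨u, (SimpleGraph.is3Clique_triple_iff.1 hs).2, rfl⟩
  · rintro ⟨u, ⟨hvu, hwu⟩, rfl⟩
    exact ⟨SimpleGraph.is3Clique_triple_iff.2 ⟨hvw, hvu, hwu⟩, by simp, by simp⟩

theorem card_filter_mem_cliqueFinset_three {v w : V} (hvw : G.Adj v w) :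
    #{s ∈ G.cliqueFinset 3 | v ∈ s ∧ w ∈ s} = #(G.neighborFinset v ∩ G.neighborFinset w) := by
  rw [filter_mem_cliqueFinset_three_eq_image hvw, card_image_of_injOn]
  intro u hu u' _ (heq : {v, w, u} = ({v, w, u'} : Finset V))
  simp only [coe_inter, Set.mem_inter_iff, mem_coe, G.mem_neighborFinset] at hu
  have hmem : u ∈ ({v, w, u'} : Finset V) := heq ▸ by simp
  simpa [hu.1.ne', hu.2.ne'] using hmem

variable (G)

theorem sum_card_filter_mem_cliqueFinset (k : ℕ) :
    ∑ v, ∑ w ∈ G.neighborFinset v, #{s ∈ G.cliqueFinset k | v ∈ s ∧ w ∈ s} =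
      #(G.cliqueFinset k) * (k * (k - 1)) :=
  calc
    _ = ∑ v, ∑ s ∈ G.cliqueFinset k with v ∈ s, #(G.neighborFinset v ∩ s) := by
      simp only [card_eq_sum_ones]
      refine sum_congr rfl fun v _ ↦ sum_comm' fun w s ↦ ?_
      simp only [mem_filter, mem_inter]
      tauto
    _ = ∑ s ∈ G.cliqueFinset k, ∑ v ∈ s, #(G.neighborFinset v ∩ s) :=
      sum_comm' (by simp [and_comm])
    _ = ∑ s ∈ G.cliqueFinset k, k * (k - 1) := by
      refine sum_congr rfl fun s hs ↦ ?_
      have hclique := G.mem_cliqueFinset_iff.1 hs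
      rw [← hclique.card_eq, ← smul_eq_mul]
      refine sum_eq_card_nsmul fun v hv ↦ ?_
      rw [neighborFinset_inter_eq_erase_of_isClique hclique.isClique hv, card_erase_of_mem hv]
    _ = #(G.cliqueFinset k) * (k * (k - 1)) := by rw [sum_const, smul_eq_mul]

theorem sum_card_inter_neighborFinset :
    ∑ v, ∑ w ∈ G.neighborFinset v, #(G.neighborFinset v ∩ G.neighborFinset w) =
      6 * #(G.cliqueFinset 3) := by
  rw [mul_comm, ← sum_card_filter_mem_cliqueFinset G 3]
  refine sum_congr rfl fun v _ ↦ sum_congr rfl fun w hw ↦ ?_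
  rw [card_filter_mem_cliqueFinset_three ((G.mem_neighborFinset v w).1 hw)]

theorem moon_moser_inequality :
    ∑ v, G.degree v ^ 2 ≤ Fintype.card V * #G.edgeFinset + 3 * #(G.cliqueFinset 3) := by
  suffices 2 * ∑ v, G.degree v ^ 2 ≤
      2 * (Fintype.card V * #G.edgeFinset + 3 * #(G.cliqueFinset 3)) by lia
  calc
    2 * ∑ v, G.degree v ^ 2 = ∑ v, ∑ w ∈ G.neighborFinset v, (G.degree v + G.degree w) := by
      simp only [sum_add_distrib, sum_sum_neighborFinset_left, sum_sum_neighborFinset_right,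
        smul_eq_mul, ← sq, two_mul]
    _ ≤ ∑ v, ∑ w ∈ G.neighborFinset v,
        (Fintype.card V + #(G.neighborFinset v ∩ G.neighborFinset w)) := by
      gcongr ∑ v, ∑ w ∈ _, ?_ with v _ w
      exact degree_add_degree_le_card_add_card_inter G v w
    _ = 2 * (Fintype.card V * #G.edgeFinset + 3 * #(G.cliqueFinset 3)) := by
      simp only [sum_add_distrib, sum_sum_neighborFinset_const, sum_card_inter_neighborFinset,
        smul_eq_mul]
      ring

end Counting

theorem triangle_lower_bound {V : Type*} [Fintype V] [DecidableEq V]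
    (G : SimpleGraph V) [DecidableRel G.Adj]
    (n m t : ℕ) (hn : n = Fintype.card V) (hm : m = G.edgeFinset.card)
    (ht : t = (G.cliqueFinset 3).card) :
    ((∑ i, (G.degree i : ℝ) ^ 2) - n * m) / 3 ≤ t := by
  subst hn hm ht
  have hsq : ∑ i, (G.degree i : ℝ) ^ 2 ≤
      Fintype.card V * #G.edgeFinset + 3 * #(G.cliqueFinset 3) := by
    exact_mod_cast moon_moser_inequality G
  linarith
end
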